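/- Let n ≥ 1 and let μ : C_c^∞(ℝ^{2n}) → ℂ be a ℂ-linear functional (no continuity assumed) vanishing on all Poisson brackets, i.e. μ({f, g}) = 0 for all f, g ∈ C_c^∞(ℝ^{2n}). Then there exists a constant c ∈ ℂ such that μ(f) = c ∫_{ℝ^{2n}} f(x) d^{2n}x for all f ∈ C_c^∞(ℝ^{2n}). -/

import Mathlib

open MeasureTheory

/-- The `i`-th partial derivative of a function on `ℝᵐ` (modeled as Euclidean space). -/
noncomputable def partialDeriv {m : ℕ} (f : EuclideanSpace ℝ (Fin m) → ℂ) (i : Fin m) :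
    EuclideanSpace ℝ (Fin m) → ℂ :=
  fun x => fderiv ℝ f x (EuclideanSpace.single i 1)

/-- The standard Poisson bracket on `ℝ^{2n}`:
`{f, g} = Σ_{k<n} (∂f/∂x_k ∂g/∂x_{n+k} − ∂f/∂x_{n+k} ∂g/∂x_k)`. -/
noncomputable def poissonBracket {n : ℕ} (f g : EuclideanSpace ℝ (Fin (2 * n)) → ℂ) :
    EuclideanSpace ℝ (Fin (2 * n)) → ℂ :=
  fun x => ∑ k : Fin n,
    (partialDeriv f ⟨k.1, by have := k.isLt; omega⟩ x *
        partialDeriv g ⟨n + k.1, by have := k.isLt; omega⟩ x -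
      partialDeriv f ⟨n + k.1, by have := k.isLt; omega⟩ x *
        partialDeriv g ⟨k.1, by have := k.isLt; omega⟩ x)

/-- `C_c^∞(ℝ^{2n})`: smooth compactly supported complex-valued functions on `ℝ^{2n}`. -/
noncomputable def TestFunctions2 (n : ℕ) :
    Submodule ℂ (EuclideanSpace ℝ (Fin (2 * n)) → ℂ) where
  carrier := {f | ContDiff ℝ (⊤ : ℕ∞) f ∧ HasCompactSupport f}
  add_mem' := fun hf hg => ⟨hf.1.add hg.1, hf.2.add hg.2⟩
  zero_mem' := ⟨contDiff_const, HasCompactSupport.zero⟩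
  smul_mem' := fun c f hf => ⟨hf.1.const_smul c,
    IsCompact.of_isClosed_subset hf.2 (isClosed_tsupport _)
      (tsupport_smul_subset_right (fun _ => c) f)⟩

/-!
A test function whose integral over every line in direction `v` vanishes is the `v`-derivative of
a test function, namely of its primitive along those lines. If `ρ` has integral one, `f` has the
same line integrals as its average `ρ(ℓ x) ∫ f(x + t v) dt`, so modulo `v`-derivatives it may be
replaced by this average. Averaging along all vectors of a basis leaves a scalar multiple of
`∏ᵢ ρ(xᵢ)`, and integrating shows that the scalar is zero when `∫ f = 0`: test functions of
integral zero are sums of partial derivatives of test functions. Finally `∂f/∂xₖ = {f, x_{n+k}}`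
and `∂f/∂x_{n+k} = {f, -xₖ}`, where the coordinate functions may be cut off outside the support
of `f`, so every partial derivative is a Poisson bracket.
-/

open Set Function
open scoped ContDiff Topology Convolution

section IsTestFunction

variable {E F : Type*} [NormedAddCommGroup E] [NormedSpace ℝ E]
  [NormedAddCommGroup F] [NormedSpace ℝ F]

/-- `f ∈ C_c^∞(E, F)`. Unbundled, so that it can be applied directly to the functions which
`TestFunctions2` carries. -/
def IsTestFunction (f : E → F) : Prop :=
  ContDiff ℝ ∞ f ∧ HasCompactSupport f

namespace IsTestFunction

variable {f g : E → F}

theorem sub (hf : IsTestFunction f) (hg : IsTestFunction g) : IsTestFunction (f - g) :=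
  ⟨hf.1.sub hg.1, hf.2.sub hg.2⟩

theorem fderiv_apply (hf : IsTestFunction f) (v : E) :
    IsTestFunction fun x ↦ fderiv ℝ f x v :=
  ⟨(hf.1.fderiv_right (by simp)).clm_apply contDiff_const, hf.2.fderiv_apply ℝ v⟩

theorem differentiable (hf : IsTestFunction f) : Differentiable ℝ f :=
  hf.1.differentiable (by simp)

theorem integrable [MeasurableSpace E] [OpensMeasurableSpace E] {μ : Measure E}
    [IsFiniteMeasureOnCompacts μ] (hf : IsTestFunction f) : Integrable f μ :=
  hf.1.continuous.integrable_of_hasCompactSupport hf.2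

theorem integral_fderiv_apply_eq_zero [FiniteDimensional ℝ E] [MeasurableSpace E] [BorelSpace E]
    {μ : Measure E} [μ.IsAddHaarMeasure] (hf : IsTestFunction f) (v : E) :
    ∫ x, fderiv ℝ f x v ∂μ = 0 := by
  simpa using integral_smul_fderiv_eq_neg_fderiv_smul_of_integrable (μ := μ) (g := f) (v := v)
    (f := fun _ ↦ (1 : ℝ)) (by simp) (by simpa using (hf.fderiv_apply v).integrable)
    (by simpa using hf.integrable) (by simp) (fun x _ ↦ hf.differentiable x)

theorem comp_add_smul (hf : IsTestFunction f) (x : E) {v : E} (hv : v ≠ 0) :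
    IsTestFunction fun t : ℝ ↦ f (x + t • v) :=
  ⟨hf.1.comp (by fun_prop), hf.2.comp_isClosedEmbedding
    ((Homeomorph.addLeft x).isClosedEmbedding.comp (isClosedEmbedding_smul_left hv))⟩

theorem exists_integral_eq_one (E 𝕜 : Type*) [NormedAddCommGroup E] [NormedSpace ℝ E]
    [FiniteDimensional ℝ E] [MeasurableSpace E] [BorelSpace E] [RCLike 𝕜] (μ : Measure E)
    [IsLocallyFiniteMeasure μ] [μ.IsOpenPosMeasure] :
    ∃ φ : E → 𝕜, IsTestFunction φ ∧ ∫ x, φ x ∂μ = 1 := by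
  let bump : ContDiffBump (0 : E) := ⟨1, 2, one_pos, one_lt_two⟩
  refine ⟨fun x ↦ (bump.normed μ x : 𝕜), ⟨(RCLike.ofRealCLM (K := 𝕜)).contDiff.comp
    bump.contDiff_normed, bump.hasCompactSupport_normed.comp_left RCLike.ofReal_zero⟩, ?_⟩
  rw [integral_ofReal, bump.integral_normed, RCLike.ofReal_one]

theorem exists_eventuallyEq_of_isCompact [FiniteDimensional ℝ E] {K : Set E} (hK : IsCompact K)
    (hf : ContDiff ℝ ∞ f) : ∃ g : E → F, IsTestFunction g ∧ ∀ x ∈ K, g =ᶠ[𝓝 x] f := by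
  obtain ⟨R, hR, hKR⟩ := hK.isBounded.subset_ball_lt 0 (0 : E)
  let χ : ContDiffBump (0 : E) := ⟨R, R + 1, hR, lt_add_one R⟩
  refine ⟨fun x ↦ χ x • f x, ⟨χ.contDiff.smul hf, χ.hasCompactSupport.smul_right⟩, fun x hx ↦ ?_⟩
  filter_upwards [χ.eventuallyEq_one_of_mem_ball (hKR hx)] with y hy
  simp [hy]

end IsTestFunction

end IsTestFunction

section LineIntegral

variable {E F : Type*} [NormedAddCommGroup E] [NormedSpace ℝ E]
  [NormedAddCommGroup F] [NormedSpace ℝ F] {f : E → F} {v w : E} {ν : Measure ℝ}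

/-- The integral of `f` along the line through `x` in direction `v`, parametrized with base
point `x` and weighted by `ν`: Lebesgue measure gives the integral over the whole line, its
restriction to `Iic 0` the primitive of `f` along the line. -/
noncomputable def lineIntegral (ν : Measure ℝ) (v : E) (f : E → F) (x : E) : F :=
  ∫ t, f (x + t • v) ∂ν

theorem lineIntegral_add_smul_self (v : E) (f : E → F) (x : E) (s : ℝ) :
    lineIntegral volume v f (x + s • v) = lineIntegral volume v f x := by
  simpa only [lineIntegral, add_smul, add_assoc] using
    integral_add_left_eq_self (fun t ↦ f (x + t • v)) s

theorem lineIntegral_add_smul_of_forall_add_smul (hf : ∀ x (s : ℝ), f (x + s • w) = f x) (x : E)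
    (s : ℝ) : lineIntegral ν v f (x + s • w) = lineIntegral ν v f x := by
  simp only [lineIntegral, add_right_comm x (s • w), hf]

theorem lineIntegral_smul_of_forall_add_smul {a : E → ℝ}
    (ha : ∀ x (t : ℝ), a (x + t • v) = a x) (f : E → F) (x : E) :
    lineIntegral ν v (fun y ↦ a y • f y) x = a x • lineIntegral ν v f x := by
  simp only [lineIntegral, ha, integral_smul]

theorem lineIntegral_restrict_Iic_add_smul (v : E) (f : E → F) (x : E) (s : ℝ) :
    lineIntegral (volume.restrict (Iic 0)) v f (x + s • v) = ∫ t in Iic s, f (x + t • v) := by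
  have shift := (measurePreserving_add_left volume s).setIntegral_preimage_emb
    (measurableEmbedding_addLeft s) (fun t ↦ f (x + t • v)) (Iic s)
  simpa [lineIntegral, add_smul, add_assoc] using shift

theorem lineIntegral_restrict_Iic_eq_zero_of_notMem_convex {C : Set E} (hC : Convex ℝ C)
    (hfC : support f ⊆ C) {x : E} (hf0 : lineIntegral volume v f x = 0) (hx : x ∉ C) :
    lineIntegral (volume.restrict (Iic 0)) v f x = 0 := by
  by_contra hne
  -- Otherwise both halves of the line through `x` meet `C`, and `x` lies between.
  obtain ⟨t, ht, hft⟩ : ∃ t ∈ Iic (0 : ℝ), f (x + t • v) ≠ 0 := by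
    by_contra! h
    exact hne (setIntegral_eq_zero_of_forall_eq_zero h)
  obtain ⟨s, hs, hfs⟩ : ∃ s ∉ Iic (0 : ℝ), f (x + s • v) ≠ 0 := by
    by_contra! h
    exact hne ((setIntegral_eq_integral_of_forall_compl_eq_zero h).trans hf0)
  have hline : Convex ℝ {r : ℝ | x + r • v ∈ C} := by
    simpa [preimage, AffineMap.lineMap_apply, add_comm] using
      hC.affine_preimage (AffineMap.lineMap x (x + v))
  have hmem : (0 : ℝ) ∈ {r : ℝ | x + r • v ∈ C} :=
    hline.ordConnected.out (hfC hft) (hfC hfs) ⟨ht, (not_le.1 hs).le⟩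
  exact hx (by simpa using hmem)

theorem hasDerivAt_integral_Iic [CompleteSpace F] {φ : ℝ → F} (hφ : Continuous φ)
    (hφi : Integrable φ) (s : ℝ) : HasDerivAt (fun u ↦ ∫ t in Iic u, φ t) (φ s) s := by
  have split : (fun u ↦ ∫ t in Iic u, φ t) =
      fun u ↦ (∫ t in Iic s, φ t) + ∫ t in s..u, φ t := by
    funext u
    rw [← intervalIntegral.integral_Iic_sub_Iic hφi.integrableOn hφi.integrableOn,
      add_sub_cancel]
  rw [split]
  exact (intervalIntegral.integral_hasDerivAt_right (hφ.intervalIntegrable s s)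
    (hφ.stronglyMeasurableAtFilter _ _) hφ.continuousAt).const_add _

namespace IsTestFunction

theorem contDiff_lineIntegral [FiniteDimensional ℝ E] [IsLocallyFiniteMeasure ν]
    (hf : IsTestFunction f) (hv : v ≠ 0) : ContDiff ℝ ∞ (lineIntegral ν v f) := by
  borelize E
  -- `lineIntegral ν v f` is the convolution of `f` with the image of `ν` under `t ↦ t • (-v)`.
  let line : ℝ → E := fun t ↦ t • (-v)
  have hline : Topology.IsClosedEmbedding line := isClosedEmbedding_smul_left (neg_ne_zero.2 hv)
  have : IsFiniteMeasureOnCompacts (ν.map line) := ⟨fun K hK ↦ by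
    rw [hline.measurableEmbedding.map_apply]
    exact (hline.isCompact_preimage hK).measure_lt_top⟩
  have : IsLocallyFiniteMeasure (ν.map line) := isLocallyFiniteMeasure_of_isFiniteMeasureOnCompacts
  have : lineIntegral ν v f =
      (fun _ ↦ (1 : ℝ)) ⋆[ContinuousLinearMap.lsmul ℝ ℝ, ν.map line] f := by
    funext x
    rw [convolution_def, hline.measurableEmbedding.integral_map]
    simp [lineIntegral, line]
  rw [this]
  exact hf.2.contDiff_convolution_right _ (locallyIntegrable_const _) hf.1

theorem hasLineDerivAt_lineIntegral [CompleteSpace F] (hf : IsTestFunction f) (hv : v ≠ 0)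
    (x : E) : HasLineDerivAt ℝ (lineIntegral (volume.restrict (Iic 0)) v f) (f x) x v := by
  have slice := hf.comp_add_smul x hv
  simpa [HasLineDerivAt, lineIntegral_restrict_Iic_add_smul] using
    hasDerivAt_integral_Iic slice.1.continuous slice.integrable 0

theorem hasCompactSupport_lineIntegral_restrict_Iic [FiniteDimensional ℝ E]
    (hf : IsTestFunction f) (hf0 : ∀ x, lineIntegral volume v f x = 0) :
    HasCompactSupport (lineIntegral (volume.restrict (Iic 0)) v f) := by
  obtain ⟨R, hR⟩ := hf.2.isCompact.isBounded.subset_closedBall (0 : E)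
  exact .intro (isCompact_closedBall 0 R) fun x hx ↦
    lineIntegral_restrict_Iic_eq_zero_of_notMem_convex (convex_closedBall 0 R)
      ((subset_tsupport f).trans hR) (hf0 x) hx

theorem exists_fderiv_apply_eq [FiniteDimensional ℝ E] [CompleteSpace F]
    (hf : IsTestFunction f) (hv : v ≠ 0) (hf0 : ∀ x, lineIntegral volume v f x = 0) :
    ∃ h : E → F, IsTestFunction h ∧ ∀ x, fderiv ℝ h x v = f x :=
  have hP : IsTestFunction (lineIntegral (volume.restrict (Iic 0)) v f) :=
    ⟨hf.contDiff_lineIntegral hv, hf.hasCompactSupport_lineIntegral_restrict_Iic hf0⟩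
  ⟨_, hP, fun x ↦ (hP.differentiable x).hasFDerivAt.hasLineDerivAt v |>.unique
    (hf.hasLineDerivAt_lineIntegral hv x)⟩

end IsTestFunction

end LineIntegral

section LineAverage

variable {E F : Type*} [NormedAddCommGroup E] [NormedSpace ℝ E]
  [NormedAddCommGroup F] [NormedSpace ℝ F]
  {f : E → F} {ρ : ℝ → ℝ} {ℓ : StrongDual ℝ E} {v : E}

/-- Redistribution of the mass of `f` on each line in direction `v` according to the profile `ρ`
in the coordinate `ℓ`. It preserves the mass of every line when `ℓ v = 1` and `∫ ρ = 1`. -/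
noncomputable def lineAverage (ρ : ℝ → ℝ) (ℓ : StrongDual ℝ E) (v : E) (f : E → F) (x : E) : F :=
  ρ (ℓ x) • lineIntegral volume v f x

theorem lineAverage_smul_of_forall_add_smul {a : E → ℝ}
    (ha : ∀ x (t : ℝ), a (x + t • v) = a x) (f : E → F) (x : E) :
    lineAverage ρ ℓ v (fun y ↦ a y • f y) x = (ρ (ℓ x) * a x) • lineIntegral volume v f x := by
  rw [lineAverage, lineIntegral_smul_of_forall_add_smul ha, smul_smul]

theorem lineIntegral_lineAverage [CompleteSpace F] (hρ : ∫ t, ρ t = 1) (hv : ℓ v = 1)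
    (f : E → F) (x : E) :
    lineIntegral volume v (lineAverage ρ ℓ v f) x = lineIntegral volume v f x := by
  calc lineIntegral volume v (lineAverage ρ ℓ v f) x
      = ∫ t, ρ (ℓ x + t) • lineIntegral volume v f x := by
        simp only [lineIntegral.eq_def volume v (lineAverage ρ ℓ v f), lineAverage,
          lineIntegral_add_smul_self, map_add, map_smul, hv, smul_eq_mul, mul_one]
    _ = lineIntegral volume v f x := by
        rw [integral_smul_const, integral_add_left_eq_self, hρ, one_smul]

namespace IsTestFunction

protected theorem lineAverage [FiniteDimensional ℝ E] (hf : IsTestFunction f)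
    (hρ : IsTestFunction ρ) (hv : ℓ v = 1) : IsTestFunction (lineAverage ρ ℓ v f) := by
  have hv0 : v ≠ 0 := by rintro rfl; simp at hv
  refine ⟨(hρ.1.comp ℓ.contDiff).smul (hf.contDiff_lineIntegral hv0), ?_⟩
  let transport : E × ℝ → E := fun p ↦ p.1 + (p.2 - ℓ p.1) • v
  have hK : IsCompact (transport '' (tsupport f ×ˢ tsupport ρ)) :=
    (hf.2.isCompact.prod hρ.2.isCompact).image (by fun_prop)
  refine .intro hK fun x hx ↦ ?_
  by_contra hne
  have hρx : ρ (ℓ x) ≠ 0 := left_ne_zero_of_smul hne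
  obtain ⟨t, hft⟩ : ∃ t : ℝ, f (x + t • v) ≠ 0 := by
    by_contra! h
    exact right_ne_zero_of_smul hne (by simp [lineIntegral, h])
  exact hx ⟨(x + t • v, ℓ x), ⟨subset_tsupport f hft, subset_tsupport ρ hρx⟩, by
    simp [transport, hv]⟩

theorem exists_fderiv_apply_eq_sub_lineAverage [FiniteDimensional ℝ E] [CompleteSpace F]
    (hf : IsTestFunction f) (hρ : IsTestFunction ρ) (hρ1 : ∫ t, ρ t = 1) (hv : ℓ v = 1) :
    ∃ h : E → F, IsTestFunction h ∧ ∀ x, fderiv ℝ h x v = f x - lineAverage ρ ℓ v f x := by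
  have hv0 : v ≠ 0 := by rintro rfl; simp at hv
  have hA := hf.lineAverage hρ hv
  refine (hf.sub hA).exists_fderiv_apply_eq hv0 fun x ↦ ?_
  calc _ = lineIntegral volume v f x - lineIntegral volume v (lineAverage ρ ℓ v f) x :=
        integral_sub (hf.comp_add_smul x hv0).integrable (hA.comp_add_smul x hv0).integrable
    _ = 0 := by rw [lineIntegral_lineAverage hρ1 hv, sub_self]

end IsTestFunction

end LineAverage

section Divergence

theorem eq_apply_zero_of_forall_add_smul_basis {R M X ι : Type*} [Semiring R] [AddCommMonoid M]
    [Module R M] (b : Module.Basis ι R M) {G : M → X}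
    (hG : ∀ i x (t : R), G (x + t • b i) = G x) (x : M) : G x = G 0 := by
  suffices h : ∀ y ∈ Submodule.span R (range b), ∀ z, G (z + y) = G z by
    simpa using h x (b.mem_span x) 0
  intro y hy
  induction hy using Submodule.closure_induction with
  | zero => simp
  | add y₁ y₂ _ _ h₁ h₂ => intro z; rw [← add_assoc, h₂, h₁]
  | smul_mem t y hy =>
    obtain ⟨i, rfl⟩ := hy
    exact fun z ↦ hG i z t

variable {E F ι : Type*} [NormedAddCommGroup E] [NormedSpace ℝ E] [FiniteDimensional ℝ E]
  [NormedAddCommGroup F] [NormedSpace ℝ F] [CompleteSpace F]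
  {f : E → F} {ρ : ℝ → ℝ}

namespace IsTestFunction

theorem exists_eq_sum_fderiv_add_prod_smul_of_finset (hf : IsTestFunction f)
    (b : Module.Basis ι ℝ E) (hρ : IsTestFunction ρ) (hρ1 : ∫ t, ρ t = 1) (s : Finset ι) :
    ∃ (h : ι → E → F) (G : E → F), (∀ i ∈ s, IsTestFunction (h i)) ∧
      (∀ i ∈ s, ∀ x (t : ℝ), G (x + t • b i) = G x) ∧
      IsTestFunction (fun x ↦ (∏ i ∈ s, ρ (b.coord i x)) • G x) ∧
      ∀ x, f x = ∑ i ∈ s, fderiv ℝ (h i) x (b i) + (∏ i ∈ s, ρ (b.coord i x)) • G x := by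
  classical
  induction s using Finset.induction_on with
  | empty => exact ⟨0, f, by simp, by simp, by simpa using hf, by simp⟩
  | insert j s hj ih =>
    obtain ⟨h, G, hh, hG, hψG, hfh⟩ := ih
    let ψ : E → ℝ := fun x ↦ ∏ i ∈ s, ρ (b.coord i x)
    let ℓ : StrongDual ℝ E := (b.coord j).toContinuousLinearMap
    have hℓ : ℓ (b j) = 1 := by simp [ℓ]
    have hψ (x : E) (t : ℝ) : ψ (x + t • b j) = ψ x :=
      Finset.prod_congr rfl fun i hi ↦ by simp [ne_of_mem_of_not_mem hi hj]
    have average : lineAverage ρ ℓ (b j) (fun x ↦ ψ x • G x) =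
        fun x ↦ (∏ i ∈ insert j s, ρ (b.coord i x)) • lineIntegral volume (b j) G x := by
      funext x
      rw [lineAverage_smul_of_forall_add_smul hψ, Finset.prod_insert hj]
      rfl
    obtain ⟨p, hp, hpj⟩ := hψG.exists_fderiv_apply_eq_sub_lineAverage hρ hρ1 hℓ
    refine ⟨update h j p, lineIntegral volume (b j) G, ?_, ?_, ?_, fun x ↦ ?_⟩
    · intro i hi
      obtain rfl | his := Finset.mem_insert.1 hi
      · simpa using hp
      · simpa [ne_of_mem_of_not_mem his hj] using hh i his
    · intro i hi x t
      obtain rfl | his := Finset.mem_insert.1 hi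
      · exact lineIntegral_add_smul_self _ G x t
      · exact lineIntegral_add_smul_of_forall_add_smul (hG i his) x t
    · rw [← average]
      exact hψG.lineAverage hρ hℓ
    · have hupdate : ∑ i ∈ s, fderiv ℝ (update h j p i) x (b i) = ∑ i ∈ s, fderiv ℝ (h i) x (b i) :=
        Finset.sum_congr rfl fun i hi ↦ by rw [update_of_ne (ne_of_mem_of_not_mem hi hj)]
      rw [Finset.sum_insert hj, hupdate, update_self, hpj, hfh, ← congrFun average x]
      abel

variable [Fintype ι]

theorem exists_eq_sum_fderiv_add_prod_smul (hf : IsTestFunction f)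
    (b : Module.Basis ι ℝ E) (hρ : IsTestFunction ρ) (hρ1 : ∫ t, ρ t = 1) :
    ∃ (h : ι → E → F) (c : F), (∀ i, IsTestFunction (h i)) ∧
      ∀ x, f x = ∑ i, fderiv ℝ (h i) x (b i) + (∏ i, ρ (b.coord i x)) • c := by
  obtain ⟨h, G, hh, hG, -, hfh⟩ :=
    hf.exists_eq_sum_fderiv_add_prod_smul_of_finset b hρ hρ1 Finset.univ
  refine ⟨h, G 0, fun i ↦ hh i (Finset.mem_univ i), fun x ↦ ?_⟩
  rw [hfh, eq_apply_zero_of_forall_add_smul_basis b (fun i ↦ hG i (Finset.mem_univ i)) x]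

theorem integral_eq_smul_of_eq_sum_fderiv_add [MeasurableSpace E] [BorelSpace E]
    {μ : Measure E} [μ.IsAddHaarMeasure] (hf : IsTestFunction f) {h : ι → E → F}
    (hh : ∀ i, IsTestFunction (h i)) {v : ι → E} {ψ : E → ℝ} {c : F}
    (hfh : ∀ x, f x = ∑ i, fderiv ℝ (h i) x (v i) + ψ x • c) :
    ∫ x, f x ∂μ = (∫ x, ψ x ∂μ) • c := by
  have hdiv (i : ι) : Integrable (fun x ↦ fderiv ℝ (h i) x (v i)) μ :=
    ((hh i).fderiv_apply (v i)).integrable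
  calc ∫ x, f x ∂μ = ∫ x, (f x - ∑ i, fderiv ℝ (h i) x (v i)) ∂μ := by
        rw [integral_sub hf.integrable (integrable_finsetSum _ fun i _ ↦ hdiv i),
          integral_finsetSum _ fun i _ ↦ hdiv i]
        simp [(hh _).integral_fderiv_apply_eq_zero]
    _ = (∫ x, ψ x ∂μ) • c := by simp [hfh, integral_smul_const]

theorem exists_eq_sum_fderiv_of_integral_eq_zero [MeasurableSpace E] [BorelSpace E]
    {μ : Measure E} [μ.IsAddHaarMeasure] (hf : IsTestFunction f) (b : Module.Basis ι ℝ E)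
    (hf0 : ∫ x, f x ∂μ = 0) :
    ∃ h : ι → E → F, (∀ i, IsTestFunction (h i)) ∧ ∀ x, f x = ∑ i, fderiv ℝ (h i) x (b i) := by
  obtain ⟨ρ, hρ, hρ1⟩ := exists_integral_eq_one ℝ ℝ volume
  obtain ⟨φ, hφ, hφ1⟩ := exists_integral_eq_one E ℝ μ
  have hψ : ∫ x, ∏ i, ρ (b.coord i x) ∂μ ≠ 0 := by
    obtain ⟨k, a, hk, hφk⟩ := hφ.exists_eq_sum_fderiv_add_prod_smul b hρ hρ1
    rw [hφ.integral_eq_smul_of_eq_sum_fderiv_add hk hφk] at hφ1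
    exact left_ne_zero_of_smul (hφ1 ▸ one_ne_zero)
  obtain ⟨h, c, hh, hfh⟩ := hf.exists_eq_sum_fderiv_add_prod_smul b hρ hρ1
  rw [hf.integral_eq_smul_of_eq_sum_fderiv_add hh hfh] at hf0
  have hc : c = 0 := (smul_eq_zero.1 hf0).resolve_left hψ
  exact ⟨h, hh, by simpa [hc] using hfh⟩

end IsTestFunction

end Divergence

section PoissonBracket

variable {m n : ℕ}

/-- The coordinate function `x_j`, complex-valued so that it can enter a Poisson bracket. -/
noncomputable def complexCoord (j : Fin m) : EuclideanSpace ℝ (Fin m) →L[ℝ] ℂ :=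
  Complex.ofRealCLM ∘L EuclideanSpace.proj j

theorem partialDeriv_complexCoord (j i : Fin m) (x : EuclideanSpace ℝ (Fin m)) :
    partialDeriv (complexCoord j) i x = if j = i then 1 else 0 := by
  rw [partialDeriv, ContinuousLinearMap.fderiv]
  simp [complexCoord, apply_ite]

theorem partialDeriv_eq_zero_of_notMem_tsupport {f : EuclideanSpace ℝ (Fin m) → ℂ}
    {x : EuclideanSpace ℝ (Fin m)} (hx : x ∉ tsupport f) (i : Fin m) :
    partialDeriv f i x = 0 := by
  rw [partialDeriv, fderiv_of_notMem_tsupport ℝ hx, zero_apply]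

theorem poissonBracket_congr_right {f g₁ g₂ : EuclideanSpace ℝ (Fin (2 * n)) → ℂ}
    (hg : ∀ x ∈ tsupport f, g₁ =ᶠ[𝓝 x] g₂) : poissonBracket f g₁ = poissonBracket f g₂ := by
  funext x
  by_cases hx : x ∈ tsupport f
  · simp only [poissonBracket, partialDeriv, (hg x hx).fderiv_eq]
  · simp only [poissonBracket, partialDeriv_eq_zero_of_notMem_tsupport hx, zero_mul]

theorem poissonBracket_neg_right (f g : EuclideanSpace ℝ (Fin (2 * n)) → ℂ) :
    poissonBracket f (-g) = -poissonBracket f g := by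
  funext x
  simp only [poissonBracket, partialDeriv, fderiv_neg, neg_apply, Pi.neg_apply, mul_neg,
    ← Finset.sum_neg_distrib, sub_neg_eq_add, neg_sub, neg_add_eq_sub]

theorem poissonBracket_complexCoord_momentum (f : EuclideanSpace ℝ (Fin (2 * n)) → ℂ)
    (k : Fin n) :
    poissonBracket f (complexCoord ⟨n + k.1, by omega⟩) = partialDeriv f ⟨k.1, by omega⟩ := by
  funext x
  have (l : Fin n) : n + k.1 ≠ l.1 := by omega
  simp [poissonBracket, partialDeriv_complexCoord, this, ← Fin.ext_iff]

theorem poissonBracket_complexCoord_position (f : EuclideanSpace ℝ (Fin (2 * n)) → ℂ)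
    (k : Fin n) :
    poissonBracket f (complexCoord ⟨k.1, by omega⟩) = -partialDeriv f ⟨n + k.1, by omega⟩ := by
  funext x
  have (l : Fin n) : k.1 ≠ n + l.1 := by omega
  simp [poissonBracket, partialDeriv_complexCoord, this, ← Fin.ext_iff]

theorem exists_contDiff_poissonBracket_eq_partialDeriv (i : Fin (2 * n)) :
    ∃ g : EuclideanSpace ℝ (Fin (2 * n)) → ℂ, ContDiff ℝ ∞ g ∧
      ∀ f, poissonBracket f g = partialDeriv f i := by
  by_cases hi : i.1 < n
  · exact ⟨_, ContinuousLinearMap.contDiff _, fun f ↦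
      poissonBracket_complexCoord_momentum f ⟨i.1, hi⟩⟩
  · obtain ⟨k, hk⟩ : ∃ k : Fin n, i = ⟨n + k.1, by omega⟩ :=
      ⟨⟨i.1 - n, by omega⟩, by ext; simp; omega⟩
    refine ⟨-⇑(complexCoord ⟨k.1, by omega⟩), (ContinuousLinearMap.contDiff _).neg, fun f ↦ ?_⟩
    rw [poissonBracket_neg_right, poissonBracket_complexCoord_position, neg_neg, hk]

theorem exists_isTestFunction_poissonBracket_eq_partialDeriv
    {f : EuclideanSpace ℝ (Fin (2 * n)) → ℂ} (hf : HasCompactSupport f) (i : Fin (2 * n)) :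
    ∃ g : EuclideanSpace ℝ (Fin (2 * n)) → ℂ, IsTestFunction g ∧
      poissonBracket f g = partialDeriv f i := by
  obtain ⟨g₀, hg₀, hg₀f⟩ := exists_contDiff_poissonBracket_eq_partialDeriv i
  obtain ⟨g, hg, hgg₀⟩ := IsTestFunction.exists_eventuallyEq_of_isCompact hf.isCompact hg₀
  exact ⟨g, hg, (poissonBracket_congr_right hgg₀).trans (hg₀f f)⟩

theorem map_eq_zero_of_integral_eq_zero {V : Type*} [AddCommGroup V] [Module ℂ V]
    (μ : TestFunctions2 n →ₗ[ℂ] V)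
    (hμ : ∀ f g h : TestFunctions2 n,
      (h : EuclideanSpace ℝ (Fin (2 * n)) → ℂ) = poissonBracket f g → μ h = 0)
    {f : TestFunctions2 n} (hf : ∫ x, (f : EuclideanSpace ℝ (Fin (2 * n)) → ℂ) x = 0) :
    μ f = 0 := by
  obtain ⟨h, hh, hfh⟩ := IsTestFunction.exists_eq_sum_fderiv_of_integral_eq_zero f.2
    (EuclideanSpace.basisFun (Fin (2 * n)) ℝ).toBasis hf
  let d (i : Fin (2 * n)) : TestFunctions2 n :=
    ⟨partialDeriv (h i) i, (hh i).fderiv_apply (EuclideanSpace.single i 1)⟩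
  have hfd : f = ∑ i, d i := by
    ext x
    simpa [d, partialDeriv] using hfh x
  have hd (i : Fin (2 * n)) : μ (d i) = 0 := by
    obtain ⟨g, hg, hgd⟩ := exists_isTestFunction_poissonBracket_eq_partialDeriv (hh i).2 i
    exact hμ ⟨h i, hh i⟩ ⟨g, hg⟩ (d i) hgd.symm
  rw [hfd, map_sum, Finset.sum_eq_zero fun i _ ↦ hd i]

end PoissonBracket

theorem functional_vanishing_on_poisson_brackets_is_multiple_of_integral_general
    {V : Type*} [AddCommGroup V] [Module ℂ V] (n : ℕ)
    (μ : TestFunctions2 n →ₗ[ℂ] V)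
    (hμ : ∀ (f g h : TestFunctions2 n),
      (h : EuclideanSpace ℝ (Fin (2 * n)) → ℂ) = poissonBracket f g → μ h = 0) :
    ∃ c : V, ∀ f : TestFunctions2 n,
      μ f = (∫ x, (f : EuclideanSpace ℝ (Fin (2 * n)) → ℂ) x) • c := by
  obtain ⟨φ, hφ, hφ1⟩ :=
    IsTestFunction.exists_integral_eq_one _ ℂ (volume : Measure (EuclideanSpace ℝ (Fin (2 * n))))
  let φ' : TestFunctions2 n := ⟨φ, hφ⟩
  refine ⟨μ φ', fun f ↦ ?_⟩
  have hf0 : ∫ x, (f.1 x - (∫ y, f.1 y) * φ x) = 0 := by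
    rw [integral_sub (IsTestFunction.integrable f.2) (hφ.integrable.const_mul _),
      integral_const_mul, hφ1, mul_one, sub_self]
  rw [← sub_eq_zero, ← map_smul, ← map_sub]
  exact map_eq_zero_of_integral_eq_zero μ hμ hf0

/-- A `ℂ`-linear functional on `C_c^∞(ℝ^{2n})` (no continuity assumed)
vanishing on all Poisson brackets is a constant multiple of the Lebesgue integral. -/
theorem functional_vanishing_on_poisson_brackets_is_multiple_of_integral
    (n : ℕ) (hn : 1 ≤ n)
    (μ : TestFunctions2 n →ₗ[ℂ] ℂ)
    (hμ : ∀ (f g h : TestFunctions2 n),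
      (h : EuclideanSpace ℝ (Fin (2 * n)) → ℂ) =
        poissonBracket (f : EuclideanSpace ℝ (Fin (2 * n)) → ℂ)
          (g : EuclideanSpace ℝ (Fin (2 * n)) → ℂ) →
      μ h = 0) :
    ∃ c : ℂ, ∀ f : TestFunctions2 n,
      μ f = c * ∫ x, (f : EuclideanSpace ℝ (Fin (2 * n)) → ℂ) x := by
  simpa only [smul_eq_mul, mul_comm] using
    functional_vanishing_on_poisson_brackets_is_multiple_of_integral_general n μ hμ
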